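/- arXiv:2212.12590 — 5 statements merged into one kernel-verified Lean document; each statement's English description precedes it below -/
import Mathlib

section
/- Hardy inequality on hyperboloids: There is a constant C > 0 such that for every smooth function φ on ℝ^{1+3} whose restriction to each hyperboloid H_s is compactly supported with support contained in the interior of the future light cone {r < t}, and for all s ≥ s₀ > 0, one has ‖r^{−1}φ‖_{L²(H_s)} ≤ C Σ_{i=1}^{3} ‖∂̲_iφ‖_{L²(H_s)}. -/
open MeasureTheory Real Set

noncomputable section

namespace WKG

abbrev Pt : Type := ℝ × (Fin 3 → ℝ)
abbrev Fn : Type := Pt → ℝ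

/-- Euclidean radius `r = |x|`. -/
def rad (x : Fin 3 → ℝ) : ℝ := Real.sqrt (∑ i : Fin 3, (x i) ^ 2)

/-- The time coordinate `t = √(s² + |x|²)` parametrizing the hyperboloid `H_s`. -/
def hypT (s : ℝ) (x : Fin 3 → ℝ) : ℝ := Real.sqrt (s ^ 2 + (rad x) ^ 2)

/-- The point of `H_s` over `x ∈ ℝ³`. -/
def pt (s : ℝ) (x : Fin 3 → ℝ) : Pt := (hypT s x, x)

/-- `L²` norm on the hyperboloid `H_s` (with respect to `dx`). -/
def L2H (s : ℝ) (ψ : Fn) : ℝ := Real.sqrt (∫ x : Fin 3 → ℝ, (ψ (pt s x)) ^ 2)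

/-- `L^∞` norm on the hyperboloid `H_s`. -/
def LinfH (s : ℝ) (ψ : Fn) : ℝ := ⨆ x : Fin 3 → ℝ, |ψ (pt s x)|

/-- The coordinate directions of `ℝ^{1+3}`: `e4 0 = ∂_t` direction, `e4 (i+1) = ∂_i`. -/
def e4 : Fin 4 → Pt :=
  fun α => ((if α = 0 then (1 : ℝ) else 0), fun i => if (α : ℕ) = (i : ℕ) + 1 then 1 else 0)

/-- Coordinate partial derivative `∂_α` (`α = 0` is `∂_t`). -/
def pdc (α : Fin 4) (φ : Fn) : Fn := fun p => fderiv ℝ φ p (e4 α)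

/-- The time derivative `∂_t`. -/
def pdT : Fn → Fn := pdc 0

/-- The spatial derivative `∂_i`. -/
def pdX (i : Fin 3) : Fn → Fn := pdc i.succ

/-- Semi-hyperboloidal derivative `∂̲_i = ∂_i + (x_i/t) ∂_t`. -/
def shd (i : Fin 3) (φ : Fn) : Fn := fun p => pdX i φ p + (p.2 i / p.1) * pdT φ p

/-- Radial derivative `∂_r = Σ (x_i/r) ∂_i`. -/
def pdr (φ : Fn) : Fn := fun p => ∑ i : Fin 3, (p.2 i / rad p.2) * pdX i φ p

/-- Bondi derivative `∂_u^B = ∂_t`. -/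
def pduB : Fn → Fn := pdT

/-- Bondi derivative `∂_r^B = ∂_t + ∂_r`. -/
def pdrB (φ : Fn) : Fn := fun p => pdT φ p + pdr φ p

/-- Angular derivative `∇̸_i = ∂_i - (x_i/r) ∂_r`. -/
def ang (i : Fin 3) (φ : Fn) : Fn := fun p => pdX i φ p - (p.2 i / rad p.2) * pdr φ p

/-- Pointwise norm of the angular gradient `|∇̸ φ|`. -/
def angNorm (φ : Fn) : Fn := fun p => Real.sqrt (∑ i : Fin 3, (ang i φ p) ^ 2)

/-- Euclidean Laplacian in `x`. -/
def lap (φ : Fn) : Fn := fun p => ∑ i : Fin 3, pdX i (pdX i φ) p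

/-- Wave operator `□ = -∂_t² + Δ_x`. -/
def box (φ : Fn) : Fn := fun p => - pdT (pdT φ) p + lap φ p

/-- Lorentz boost `L_i = t ∂_i + x_i ∂_t`. -/
def Lb (i : Fin 3) (φ : Fn) : Fn := fun p => p.1 * pdX i φ p + p.2 i * pdT φ p

/-- Optical function `u = t - r`. -/
def uopt : Pt → ℝ := fun p => p.1 - rad p.2

/-- Optical function `ū = t + r`. -/
def ubar : Pt → ℝ := fun p => p.1 + rad p.2

/-- Japanese bracket `⟨f⟩ = (1+f²)^{1/2}`. -/
def jb (f : ℝ) : ℝ := Real.sqrt (1 + f ^ 2)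

def tauM : Pt → ℝ := fun p => jb (uopt p)
def tauP : Pt → ℝ := fun p => jb (ubar p)
def tau0 : Pt → ℝ := fun p => tauM p / tauP p

/-- Multiplication by the conformal weight `r`. -/
def mulr (φ : Fn) : Fn := fun p => rad p.2 * φ p

/-- Multiplication by the conformal weight `s² = t² - r²`. -/
def mulS2 (φ : Fn) : Fn := fun p => (p.1 ^ 2 - (rad p.2) ^ 2) * φ p

/-- Standard hyperboloidal energy norm `E_W`. -/
def EW (s : ℝ) (φ : Fn) : ℝ :=
  L2H s (fun p => (s / p.1) * pdT φ p) + ∑ i : Fin 3, L2H s (shd i φ)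

/-- Hyperboloidal Klein-Gordon energy norm `E_KG`. -/
def EKG (s : ℝ) (ψ : Fn) : ℝ :=
  L2H s (fun p => (s / p.1) * pdT ψ p) + (∑ i : Fin 3, L2H s (shd i ψ)) + L2H s ψ

/-- Weighted hyperboloidal energy norm `E_W^a`. -/
def EWa (a s : ℝ) (φ : Fn) : ℝ :=
  L2H s (fun p => (1 + a * tauP p ^ a * tau0 p ^ (max a (1/2))) * (s / p.1) * pdT φ p)
  + (∑ i : Fin 3, L2H s (fun p => s ^ a * shd i φ p))
  + a * L2H s (fun p => (s ^ a / p.1) * φ p)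

/-- Conformal energy norm `‖rφ‖_{E¹_a}`. -/
def E1 (a s : ℝ) (φ : Fn) : ℝ :=
  L2H s (fun p => (1 + a * tauP p ^ a * tau0 p ^ (max a (1/2))) * (s / p.1)
      * (pduB (mulr φ) p / rad p.2))
  + L2H s (fun p => (1 + a * tauP p ^ a * tau0 p ^ (max a (1/2))) * angNorm φ p)
  + L2H s (fun p => tauP p ^ a * (pdrB (mulr φ) p / rad p.2))
  + L2H s (fun p => tauP p ^ a * (s / p.1) * angNorm φ p)

/-- Conformal energy norm `‖s²φ‖_{E²_a}`. -/
def E2 (a s : ℝ) (φ : Fn) : ℝ :=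
  L2H s (fun p => (1 + s ^ (a - 1) * tauM p) * (s / p.1) * (pduB (mulS2 φ) p / s ^ 2))
  + L2H s (fun p => (1 + s ^ (a - 1) * tauM p) * angNorm φ p)
  + L2H s (fun p => s ^ (a - 1) * tauP p * (pdrB (mulS2 φ) p / s ^ 2))
  + L2H s (fun p => s ^ (a - 1) * tauP p * (s / p.1) * angNorm φ p)

/-- Weighted spacetime source norm `‖F‖_{N^a[s₀,s₁]}`. -/
def NWn (a s0 s1 : ℝ) (F : Fn) : ℝ :=
  ∫ s in s0..s1, L2H s (fun p => tauP p ^ a * (s / p.1) * F p)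

/-- Iterated coordinate derivatives `∂^I`. -/
def applyPd (I : Fin 4 → ℕ) (φ : Fn) : Fn :=
  (pdc 0)^[I 0] ((pdc 1)^[I 1] ((pdc 2)^[I 2] ((pdc 3)^[I 3] φ)))

/-- Iterated Lorentz boosts `L^J`. -/
def applyL (J : Fin 3 → ℕ) (φ : Fn) : Fn :=
  (Lb 0)^[J 0] ((Lb 1)^[J 1] ((Lb 2)^[J 2] φ))

/-- `∂^I L^J φ`. -/
def PL (I : Fin 4 → ℕ) (J : Fin 3 → ℕ) (φ : Fn) : Fn := applyPd I (applyL J φ)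

/-- Sum over all multi-indices `I, J` with `|I| + |J| ≤ k`. -/
def sumIdx (k : ℕ) (f : (Fin 4 → ℕ) → (Fin 3 → ℕ) → ℝ) : ℝ :=
  ∑ I : Fin 4 → Fin (k+1), ∑ J : Fin 3 → Fin (k+1),
    if (∑ α : Fin 4, (I α : ℕ)) + (∑ i : Fin 3, (J i : ℕ)) ≤ k then
      f (fun α => (I α : ℕ)) (fun i => (J i : ℕ)) else 0

def EWk (k : ℕ) (s : ℝ) (φ : Fn) : ℝ := sumIdx k (fun I J => EW s (PL I J φ))
def EWak (a : ℝ) (k : ℕ) (s : ℝ) (φ : Fn) : ℝ := sumIdx k (fun I J => EWa a s (PL I J φ))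
def E1k (a : ℝ) (k : ℕ) (s : ℝ) (φ : Fn) : ℝ := sumIdx k (fun I J => E1 a s (PL I J φ))
def E2k (a : ℝ) (k : ℕ) (s : ℝ) (φ : Fn) : ℝ := sumIdx k (fun I J => E2 a s (PL I J φ))
def EKGk (k : ℕ) (s : ℝ) (ψ : Fn) : ℝ := sumIdx k (fun I J => EKG s (PL I J ψ))
def NWnk (a : ℝ) (k : ℕ) (s0 s1 : ℝ) (F : Fn) : ℝ := sumIdx k (fun I J => NWn a s0 s1 (PL I J F))

/-- The region `K_{[s₀,s₁]} = {s₀² ≤ t² - r² ≤ s₁², r < t - 1}`. -/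
def inSlab (s0 s1 : ℝ) (p : Pt) : Prop :=
  s0 ^ 2 ≤ p.1 ^ 2 - (rad p.2) ^ 2 ∧ p.1 ^ 2 - (rad p.2) ^ 2 ≤ s1 ^ 2 ∧ rad p.2 < p.1 - 1

/-- Support of each hyperboloidal slice contained in `{r ≤ t - 1}`. -/
def suppCond (s0 s1 : ℝ) (φ : Fn) : Prop :=
  ∀ s ∈ Set.Icc s0 s1, ∀ x : Fin 3 → ℝ, hypT s x - 1 < rad x → φ (pt s x) = 0

end WKG

open WKG

lemma aux_ibp (G : (Fin 3 → ℝ) → ℝ) (hG : ContDiff ℝ 1 G) (hc : HasCompactSupport G)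
    (v : Fin 3 → ℝ) : ∫ x, fderiv ℝ G x v = 0 := by
  have hi : Integrable (fun x => fderiv ℝ G x v) := by
    apply Continuous.integrable_of_hasCompactSupport
    · exact (hG.continuous_fderiv (by norm_num)).clm_apply continuous_const
    · exact hc.fderiv_apply (𝕜 := ℝ) v
  have := integral_mul_fderiv_eq_neg_fderiv_mul_of_integrable (𝕜 := ℝ)
    (μ := (volume : Measure (Fin 3 → ℝ))) (f := fun _ => (1:ℝ)) (g := G) (v := v)
    (by simp) (by simpa using hi)
    (by simpa using hG.continuous.integrable_of_hasCompactSupport hc)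
    (fun x _ => by fun_prop) (fun x _ => hG.differentiable (by norm_num) x)
  simpa using this

lemma aux_deriv (f : (Fin 3 → ℝ) → ℝ) (hf : ContDiff ℝ 1 f) (e : ℝ) (he : 0 < e)
    (i : Fin 3) (x : Fin 3 → ℝ) :
    fderiv ℝ (fun x : Fin 3 → ℝ => f x ^ 2 * (x i * (∑ j, x j ^ 2 + e)⁻¹)) x (Pi.single i 1)
      = 2 * f x * fderiv ℝ f x (Pi.single i 1) * (x i * (∑ j, x j ^ 2 + e)⁻¹)
        + f x ^ 2 * ((∑ j, x j ^ 2 + e)⁻¹ - 2 * x i ^ 2 * ((∑ j, x j ^ 2 + e)⁻¹) ^ 2) := by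
  have hq : (∑ j, x j ^ 2 + e) ≠ 0 := by positivity
  have h1 := (hf.differentiable (by norm_num) x).hasFDerivAt
  have hx : ∀ j : Fin 3, HasFDerivAt (fun x : Fin 3 → ℝ => x j)
      (ContinuousLinearMap.proj (R := ℝ) (φ := fun _ : Fin 3 => ℝ) j) x :=
    fun j => hasFDerivAt_apply j x
  have hs : HasFDerivAt (fun x : Fin 3 → ℝ => ∑ j, x j ^ 2 + e) _ x :=
    (HasFDerivAt.fun_sum (u := Finset.univ) (fun j _ => (hx j).pow 2)).add_const e
  have hinv := (hasDerivAt_inv hq).comp_hasFDerivAt x hs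
  have h := (h1.pow 2).mul ((hx i).mul hinv)
  have h' := h.fderiv
  simp only [Function.comp_def] at h'
  erw [h']
  fin_cases i <;> simp [Fin.sum_univ_three] <;> field_simp <;> ring

lemma aux_eps (f : (Fin 3 → ℝ) → ℝ) (hf : ContDiff ℝ 1 f) (hc : HasCompactSupport f)
    (e : ℝ) (he : 0 < e) :
    ∫ x, f x ^ 2 * (∑ j, x j ^ 2 + e)⁻¹
      ≤ 4 * ∑ i, ∫ x, (fderiv ℝ f x (Pi.single i 1)) ^ 2 := by
  have hq : ∀ x : Fin 3 → ℝ, (∑ j, x j ^ 2 + e) ≠ 0 := fun x => by positivity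
  have hc2 : HasCompactSupport (fun x => f x ^ 2) :=
    hc.comp_left (g := fun y : ℝ => y ^ 2) (by norm_num)
  have hG : ∀ i : Fin 3, ContDiff ℝ 1
      (fun x : Fin 3 → ℝ => f x ^ 2 * (x i * (∑ j, x j ^ 2 + e)⁻¹)) := by
    intro i
    refine (hf.pow 2).mul (ContDiff.mul (by fun_prop) (ContDiff.inv (by fun_prop) hq))
  have hGc : ∀ i : Fin 3, HasCompactSupport
      (fun x : Fin 3 → ℝ => f x ^ 2 * (x i * (∑ j, x j ^ 2 + e)⁻¹)) := fun i => hc2.mul_right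
  have hGi : ∀ i : Fin 3, Integrable (fun x => fderiv ℝ
      (fun x : Fin 3 → ℝ => f x ^ 2 * (x i * (∑ j, x j ^ 2 + e)⁻¹)) x (Pi.single i 1)) := by
    intro i
    apply Continuous.integrable_of_hasCompactSupport
    · exact ((hG i).continuous_fderiv (by norm_num)).clm_apply continuous_const
    · exact (hGc i).fderiv_apply (𝕜 := ℝ) _
  have hfi : ∀ i : Fin 3, Integrable (fun x => (fderiv ℝ f x (Pi.single i 1)) ^ 2) := by
    intro i
    apply Continuous.integrable_of_hasCompactSupport
    · exact ((hf.continuous_fderiv (by norm_num)).clm_apply continuous_const).pow 2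
    · exact (hc.fderiv_apply (𝕜 := ℝ) _).comp_left (g := fun y : ℝ => y ^ 2) (by norm_num)
  have h0i : Integrable (fun x => f x ^ 2 * (∑ j, x j ^ 2 + e)⁻¹) := by
    apply Continuous.integrable_of_hasCompactSupport
    · exact (hf.continuous.pow 2).mul (Continuous.inv₀ (by fun_prop) hq)
    · exact hc2.mul_right
  have hsum : ∫ x, ∑ i : Fin 3, fderiv ℝ
      (fun x : Fin 3 → ℝ => f x ^ 2 * (x i * (∑ j, x j ^ 2 + e)⁻¹)) x (Pi.single i 1) = 0 := by
    rw [integral_finsetSum _ (fun i _ => hGi i)]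
    exact Finset.sum_eq_zero (fun i _ => aux_ibp _ (hG i) (hGc i) _)
  have hmono : ∫ x, (1/2 * (f x ^ 2 * (∑ j, x j ^ 2 + e)⁻¹)
        - 2 * ∑ i, (fderiv ℝ f x (Pi.single i 1)) ^ 2)
      ≤ ∫ x, ∑ i : Fin 3, fderiv ℝ
      (fun x : Fin 3 → ℝ => f x ^ 2 * (x i * (∑ j, x j ^ 2 + e)⁻¹)) x (Pi.single i 1) := by
    apply integral_mono
    · exact (h0i.const_mul _).sub ((integrable_finsetSum _ (fun i _ => hfi i)).const_mul _)
    · exact integrable_finsetSum _ (fun i _ => hGi i)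
    · intro x
      simp only [aux_deriv f hf e he]
      have hp : 0 < (∑ j, x j ^ 2 + e) := by positivity
      have hw : (∑ j, x j ^ 2) * ((∑ j, x j ^ 2 + e)⁻¹) ^ 2 ≤ (∑ j, x j ^ 2 + e)⁻¹ := by
        rw [← sub_nonneg]
        have : (∑ j, x j ^ 2 + e)⁻¹ - (∑ j, x j ^ 2) * ((∑ j, x j ^ 2 + e)⁻¹) ^ 2
          = e * ((∑ j, x j ^ 2 + e)⁻¹) ^ 2 := by
          field_simp; ring
        rw [this]; positivity
      generalize (∑ j, x j ^ 2 + e)⁻¹ = w at *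
      simp only [Fin.sum_univ_three] at *
      generalize f x = a at *
      generalize fderiv ℝ f x (Pi.single 0 1) = b0
      generalize fderiv ℝ f x (Pi.single 1 1) = b1
      generalize fderiv ℝ f x (Pi.single 2 1) = b2
      have k := mul_le_mul_of_nonneg_left hw (sq_nonneg a)
      nlinarith [sq_nonneg (a * (x 0 * w) + 2 * b0), sq_nonneg (a * (x 1 * w) + 2 * b1),
        sq_nonneg (a * (x 2 * w) + 2 * b2)]
  rw [hsum, integral_sub (h0i.const_mul _)
    ((integrable_finsetSum _ (fun i _ => hfi i)).const_mul _),
    integral_const_mul, integral_const_mul, integral_finsetSum _ (fun i _ => hfi i)] at hmono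
  linarith

lemma aux_hardy (f : (Fin 3 → ℝ) → ℝ) (hf : ContDiff ℝ 1 f) (hc : HasCompactSupport f) :
    ∫ x, (f x / rad x) ^ 2 ≤ 4 * ∑ i, ∫ x, (fderiv ℝ f x (Pi.single i 1)) ^ 2 := by
  have hR : 0 ≤ 4 * ∑ i, ∫ x, (fderiv ℝ f x (Pi.single i 1)) ^ 2 := by
    have : ∀ i : Fin 3, 0 ≤ ∫ x, (fderiv ℝ f x (Pi.single i 1)) ^ 2 :=
      fun i => integral_nonneg (fun x => sq_nonneg _)
    have := Finset.sum_nonneg (fun i (_ : i ∈ Finset.univ) => this i)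
    linarith
  by_cases hI : Integrable (fun x => (f x / rad x) ^ 2)
  swap
  · rw [integral_undef hI]; exact hR
  have hrad : ∀ x, rad x ^ 2 = ∑ j, x j ^ 2 := fun x => Real.sq_sqrt (by positivity)
  have hne : ∀ᵐ x : Fin 3 → ℝ, 0 < ∑ j, x j ^ 2 := by
    have : ∀ᵐ x : Fin 3 → ℝ, x ≠ 0 := by
      simp [ae_iff]
    filter_upwards [this] with x hx
    obtain ⟨j, hj⟩ := Function.ne_iff.mp hx
    exact Finset.sum_pos' (fun i _ => sq_nonneg _) ⟨j, Finset.mem_univ _, by have : x j ≠ 0 := hj; positivity⟩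
  have hT : Filter.Tendsto (fun n : ℕ => ∫ x, f x ^ 2 * (∑ j, x j ^ 2 + 1 / ((n:ℝ) + 1))⁻¹)
      Filter.atTop (nhds (∫ x, (f x / rad x) ^ 2)) := by
    refine tendsto_integral_of_dominated_convergence (fun x => (f x / rad x) ^ 2) ?_ hI ?_ ?_
    · intro n
      refine Continuous.aestronglyMeasurable ?_
      refine (hf.continuous.pow 2).mul (Continuous.inv₀ (by fun_prop) ?_)
      intro x; positivity
    · intro n
      filter_upwards [hne] with x hx
      rw [Real.norm_of_nonneg (by positivity), div_pow, hrad, div_eq_mul_inv (f x ^ 2)]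
      gcongr
      have : 0 < 1 / ((n:ℝ) + 1) := by positivity
      linarith
    · filter_upwards [hne] with x hx
      rw [div_pow, hrad, div_eq_mul_inv (f x ^ 2)]
      refine Filter.Tendsto.const_mul _ (Filter.Tendsto.inv₀ ?_ hx.ne')
      simpa using tendsto_one_div_add_atTop_nhds_zero_nat.const_add (∑ j, x j ^ 2)
  exact le_of_tendsto' hT (fun n => aux_eps f hf hc _ (by positivity))

lemma aux_hypT (s : ℝ) (hs : 0 < s) (x : Fin 3 → ℝ) :
    HasFDerivAt (hypT s) ((hypT s x)⁻¹ • ∑ j, x j •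
      (ContinuousLinearMap.proj (R := ℝ) (φ := fun _ : Fin 3 => ℝ) j)) x := by
  have hfun : hypT s = fun x : Fin 3 → ℝ => Real.sqrt (s ^ 2 + ∑ j, x j ^ 2) := by
    funext x
    rw [hypT, rad, Real.sq_sqrt (by positivity)]
  have hx : ∀ j : Fin 3, HasFDerivAt (fun x : Fin 3 → ℝ => x j)
      (ContinuousLinearMap.proj (R := ℝ) (φ := fun _ : Fin 3 => ℝ) j) x :=
    fun j => hasFDerivAt_apply j x
  have hsum : HasFDerivAt (fun x : Fin 3 → ℝ => s ^ 2 + ∑ j, x j ^ 2) _ x :=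
    (HasFDerivAt.fun_sum (u := Finset.univ) (fun j _ => (hx j).pow 2)).const_add (s ^ 2)
  have hp : 0 < s ^ 2 + ∑ j, x j ^ 2 := by positivity
  have h := hsum.sqrt hp.ne'
  rw [hfun]
  refine h.congr_fderiv ?_
  have := (Real.sqrt_pos.2 hp).ne'
  ext v
  simp [Fin.sum_univ_three]
  field_simp

lemma aux_shd (φ : Fn) (hφ : ContDiff ℝ 1 φ) (s : ℝ) (hs : 0 < s) (i : Fin 3)
    (x : Fin 3 → ℝ) :
    fderiv ℝ (fun x => φ (pt s x)) x (Pi.single i 1) = shd i φ (pt s x) := by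
  have hpt : HasFDerivAt (pt s) _ x := (aux_hypT s hs x).prodMk (hasFDerivAt_id x)
  have h := ((hφ.differentiable (by norm_num) (pt s x)).hasFDerivAt.comp x hpt).fderiv
  have hcomp : (fun x => φ (pt s x)) = φ ∘ pt s := rfl
  rw [hcomp, h]
  simp only [shd, pdX, pdT, pdc]
  rw [← smul_eq_mul, ← map_smul, ← map_add]
  simp only [ContinuousLinearMap.comp_apply]
  congr 1
  ext j
  · fin_cases i <;> simp [e4, pt, Fin.sum_univ_three] <;> field_simp
  · fin_cases i <;> fin_cases j <;> simp [e4, pt]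

/-- Hardy inequality on hyperboloids. -/
theorem hardy_on_hyperboloids :
    ∃ C : ℝ, 0 < C ∧ ∀ φ : Fn, ContDiff ℝ (⊤ : ℕ∞) φ →
      ∀ s0 s : ℝ, 0 < s0 → s0 ≤ s →
        HasCompactSupport (fun x : Fin 3 → ℝ => φ (pt s x)) →
        L2H s (fun p => φ p / rad p.2) ≤ C * ∑ i : Fin 3, L2H s (shd i φ) := by
  refine ⟨2, by norm_num, ?_⟩
  intro φ hφ s0 s h0 hs hc
  have hspos : 0 < s := lt_of_lt_of_le h0 hs
  have hφ1 : ContDiff ℝ 1 φ := hφ.of_le (by exact_mod_cast le_top)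
  have hT : ContDiff ℝ 1 (hypT s) := by
    have hfun : hypT s = fun x : Fin 3 → ℝ => Real.sqrt (s ^ 2 + ∑ j, x j ^ 2) := by
      funext x
      rw [hypT, rad, Real.sq_sqrt (by positivity)]
    rw [hfun]
    exact ContDiff.sqrt (by fun_prop) (fun x => by positivity)
  have hf : ContDiff ℝ 1 (fun x : Fin 3 → ℝ => φ (pt s x)) :=
    hφ1.comp (hT.prodMk contDiff_id)
  have h := aux_hardy _ hf hc
  simp only [aux_shd φ hφ1 s hspos] at h
  have hn : ∀ i : Fin 3, 0 ≤ ∫ x, (shd i φ (pt s x)) ^ 2 :=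
    fun i => integral_nonneg (fun x => sq_nonneg _)
  have hL : ∀ i : Fin 3, (L2H s (shd i φ)) ^ 2 = ∫ x, (shd i φ (pt s x)) ^ 2 :=
    fun i => Real.sq_sqrt (hn i)
  have hL0 : ∀ i : Fin 3, 0 ≤ L2H s (shd i φ) := fun i => Real.sqrt_nonneg _
  simp only [← hL] at h
  unfold L2H at h ⊢
  apply Real.sqrt_le_iff.2
  change _ ≤ 2 * ∑ i, L2H s (shd i φ) ∧ _ ≤ (2 * ∑ i, L2H s (shd i φ)) ^ 2
  refine ⟨mul_nonneg (by norm_num) (Finset.sum_nonneg fun i _ => hL0 i), le_trans h ?_⟩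
  change 4 * ∑ i, (L2H s (shd i φ)) ^ 2 ≤ _
  simp only [Fin.sum_univ_three]
  nlinarith [mul_nonneg (hL0 0) (hL0 1), mul_nonneg (hL0 0) (hL0 2), mul_nonneg (hL0 1) (hL0 2)]
end
end

section
/- Equivalence of the Morawetz weight: For every a ∈ [1/2, 1] and every (t,x) with 0 ≤ r < t (r = |x|, u = t − r, ū = t + r), one has the two-sided bound 2·a·r·t^{2a−1} ≤ ū^{2a} − u^{2a} ≤ 2(2^{2a−1} + 1)·a·r·t^{2a−1}. -/
open MeasureTheory Real Set

noncomputable section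

open WKG

/-- Two-sided equivalence of the Morawetz weight `ū^{2a} - u^{2a} ≈ a r t^{2a-1}`. -/
theorem morawetz_weight_equiv (a : ℝ) (ha : a ∈ Set.Icc (1/2 : ℝ) 1)
    (t : ℝ) (x : Fin 3 → ℝ) (h : rad x < t) :
    2 * a * rad x * t ^ (2*a - 1) ≤ (t + rad x) ^ (2*a) - (t - rad x) ^ (2*a)
    ∧ (t + rad x) ^ (2*a) - (t - rad x) ^ (2*a)
        ≤ 2 * ((2:ℝ) ^ (2*a - 1) + 1) * a * rad x * t ^ (2*a - 1) := by
  have hr : 0 ≤ rad x := Real.sqrt_nonneg _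
  have tangent : ∀ p : ℝ, 1 ≤ p → ∀ y z : ℝ, 0 < y → 0 ≤ z →
      y ^ p + p * y ^ (p - 1) * (z - y) ≤ z ^ p := by
    intro p hp y z hy hz
    have hb := one_add_mul_self_le_rpow_one_add (s := z / y - 1)
      (by have := div_nonneg hz hy.le; linarith) hp
    have e1 : 1 + (z / y - 1) = z / y := by ring
    rw [e1, Real.div_rpow hz hy.le, le_div_iff₀ (Real.rpow_pos_of_pos hy p)] at hb
    have e2 : y ^ p = y ^ (p - 1) * y := by
      rw [← Real.rpow_add_one hy.ne']; congr 1; ring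
    refine le_trans (le_of_eq ?_) hb
    rw [e2]
    field_simp
  generalize rad x = r at *
  obtain ⟨ha1, ha2⟩ := ha
  have hp : 1 ≤ 2 * a := by linarith
  have ht : 0 < t := by linarith
  have h1 := tangent (2*a) hp t (t + r) ht (by linarith)
  have h2 := tangent (2*a) hp t (t - r) ht (by linarith)
  have h3 := tangent (2*a) hp (t + r) t (by linarith) ht.le
  have h4 : (t - r) ^ (2*a) ≤ t ^ (2*a) :=
    Real.rpow_le_rpow (by linarith) (by linarith) (by linarith)
  have h5 : (t + r) ^ (2*a - 1) ≤ 2 ^ (2*a - 1) * t ^ (2*a - 1) := by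
    rw [← Real.mul_rpow (by norm_num) ht.le]
    exact Real.rpow_le_rpow (by linarith) (by linarith) (by linarith)
  have h6 := mul_le_mul_of_nonneg_left h5 (show 0 ≤ 2 * a * r by positivity)
  constructor
  · linarith
  · linarith
end
end

section
/- Scalar weight inequality: For every a ∈ [1/2, 1] and every ω ∈ [0, 1), the function g(ω) = (1+ω)^{2a} − (1−ω)^{2a} satisfies 2aω ≤ g(ω) ≤ 2a(2^{2a−1} + 1)ω. -/
open MeasureTheory Real Set

noncomputable section

/-- Scalar weight inequality `2aω ≤ (1+ω)^{2a} - (1-ω)^{2a} ≤ 2a(2^{2a-1}+1)ω`. -/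
theorem scalar_weight_inequality (a ω : ℝ) (ha : a ∈ Set.Icc (1/2 : ℝ) 1)
    (hω : ω ∈ Set.Ico (0:ℝ) 1) :
    2 * a * ω ≤ (1 + ω) ^ (2*a) - (1 - ω) ^ (2*a)
    ∧ (1 + ω) ^ (2*a) - (1 - ω) ^ (2*a) ≤ 2 * a * ((2:ℝ) ^ (2*a - 1) + 1) * ω := by
  obtain ⟨ha1, ha2⟩ := ha
  obtain ⟨h0, h1⟩ := hω
  have hp : 1 ≤ 2 * a := by linarith
  have hpos : 0 < 1 + ω := by linarith
  have hA := one_add_mul_self_le_rpow_one_add (s := ω) (by linarith) hp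
  have hB := one_add_mul_self_le_rpow_one_add (s := -ω) (by linarith) hp
  rw [← sub_eq_add_neg] at hB
  have hC : (1 - ω) ^ (2 * a) ≤ 1 :=
    Real.rpow_le_one (by linarith) (by linarith) (by linarith)
  have hlt : ω / (1 + ω) ≤ 1 := by rw [div_le_one hpos]; linarith
  have hD := one_add_mul_self_le_rpow_one_add (s := -(ω / (1 + ω))) (by linarith) hp
  have hE : 1 + -(ω / (1 + ω)) = (1 + ω)⁻¹ := by field_simp; ring
  rw [hE, Real.inv_rpow hpos.le] at hD
  have hF : (1 + ω) ^ (2 * a) = (1 + ω) ^ (2 * a - 1) * (1 + ω) := by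
    rw [← Real.rpow_add_one hpos.ne']; congr 1; ring
  have hP : 0 < (1 + ω) ^ (2 * a) := Real.rpow_pos_of_pos hpos _
  have hG := mul_le_mul_of_nonneg_left hD hP.le
  rw [mul_inv_cancel₀ hP.ne'] at hG
  have hH : (1 + ω) ^ (2 * a) * (1 + 2 * a * -(ω / (1 + ω)))
      = (1 + ω) ^ (2 * a) - 2 * a * ω * (1 + ω) ^ (2 * a - 1) := by
    rw [hF]; field_simp; ring
  rw [hH] at hG
  have hI : (1 + ω) ^ (2 * a - 1) ≤ (2:ℝ) ^ (2 * a - 1) :=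
    Real.rpow_le_rpow hpos.le (by linarith) (by linarith)
  have hJ := mul_le_mul_of_nonneg_left hI (show 0 ≤ 2 * a * ω by positivity)
  constructor
  · linarith
  · linarith
end
end

section
/- Weighted Sobolev estimate on hyperboloids: Let a ≥ 0. There is a constant C > 0 such that for every s ≥ s₀ > 1 and every smooth function φ on ℝ^{1+3} whose restriction to each hyperboloid H_s is compactly supported with support contained in the interior of the future light cone {r < t}, one has ‖s^a τ₊^{1/2} φ‖_{L^∞(H_s)} ≤ C Σ_{|J|≤2} ‖(s^a/t) L^J φ‖_{L²(H_s)}, where ‖ψ‖_{L^∞(H_s)} is the supremum of |ψ(√(s²+|x|²),x)| over x ∈ ℝ³ and the sum is over compositions L^J of at most two Lorentz boosts. -/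
open MeasureTheory Real Set

noncomputable section

open WKG

lemma ws_oneD (h hd hdd : ℝ → ℝ) (H1 : ∀ r, HasDerivAt h (hd r) r)
    (H2 : ∀ r, HasDerivAt hd (hdd r) r) (hc : Continuous hdd) (B : ℝ → ℝ) (hB : Continuous B)
    (hle : ∀ r ∈ Set.Icc (0:ℝ) 1, 2 * |h r| + 4 * |hd r| + |hdd r| ≤ B r) :
    |h 0| ≤ ∫ r in (0:ℝ)..1, r * B r := by
  have c0 : Continuous h := continuous_iff_continuousAt.2 fun r => (H1 r).continuousAt
  have c1 : Continuous hd := continuous_iff_continuousAt.2 fun r => (H2 r).continuousAt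
  have key : ∫ r in (0:ℝ)..1, r * (2 * h r - 4 * (1 - r) * hd r + (1 - r)^2 * hdd r) = h 0 := by
    have D : ∀ r ∈ Set.uIcc (0:ℝ) 1, HasDerivAt
        (fun r => r * (-2 * (1 - r) * h r + (1-r)^2 * hd r) - (1-r)^2 * h r)
        (r * (2 * h r - 4 * (1 - r) * hd r + (1 - r)^2 * hdd r)) r := by
      intro r _
      have e : HasDerivAt (fun r : ℝ => 1 - r) (-1) r := by
        simpa using (hasDerivAt_id r).const_sub 1
      have e2 := e.pow 2
      have := (((hasDerivAt_id r).mul (((e.const_mul (-2)).mul (H1 r)).add (e2.mul (H2 r)))).sub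
        (e2.mul (H1 r)))
      refine this.congr_deriv ?_
      simp only [id, Pi.pow_apply, Pi.mul_apply, Pi.add_apply]
      push_cast
      ring
    rw [intervalIntegral.integral_eq_sub_of_hasDerivAt D
      (Continuous.intervalIntegrable (by fun_prop) _ _)]
    simp
  rw [← key]
  refine (intervalIntegral.abs_integral_le_integral_abs zero_le_one).trans ?_
  refine intervalIntegral.integral_mono_on zero_le_one
    (Continuous.intervalIntegrable (by fun_prop) _ _)
    (Continuous.intervalIntegrable (by fun_prop) _ _) ?_
  intro r hr
  rw [abs_mul, abs_of_nonneg hr.1]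
  refine mul_le_mul_of_nonneg_left ((?_ : _ ≤ _).trans (hle r hr)) hr.1
  have h1 : |4 * (1 - r) * hd r| ≤ 4 * |hd r| := by
    rw [abs_mul, abs_of_nonneg (by linarith [hr.2])]
    exact mul_le_mul_of_nonneg_right (by linarith [hr.1]) (abs_nonneg _)
  have h2 : |(1 - r)^2 * hdd r| ≤ |hdd r| := by
    rw [abs_mul, abs_of_nonneg (by positivity)]
    exact mul_le_of_le_one_left (abs_nonneg _) (by nlinarith [hr.1, hr.2])
  calc _ ≤ |2 * h r - 4 * (1 - r) * hd r| + |(1 - r)^2 * hdd r| := abs_add_le _ _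
    _ ≤ |2 * h r| + |4 * (1 - r) * hd r| + |(1 - r)^2 * hdd r| := by
        gcongr; exact abs_sub _ _
    _ ≤ _ := by rw [abs_mul 2, abs_two]; gcongr

lemma ws_avg (K : (Fin 3 → ℝ) → ℝ) (hK : Continuous K)
    (hint : Integrable (fun x => K x ^ 2)) (x0 : Fin 3 → ℝ) (δ A B : ℝ) (hδ : 0 < δ) (hB : 0 ≤ B)
    (hA : ∀ y ∈ Set.Icc (0 : Fin 3 → ℝ) 1, A ≤ B * ∫ r in (0:ℝ)..1, r * K (x0 + (r * δ) • y)) :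
    A ≤ B * (2 * (Real.sqrt (∫ x, K x ^ 2) / Real.sqrt (δ ^ 3))) := by
  set M := ∫ x, K x ^ 2 with hM
  set Q := Set.Icc (0 : Fin 3 → ℝ) 1 with hQ
  have hQc : IsCompact Q := isCompact_Icc
  have hvol : (volume Q) = 1 := by
    rw [hQ, Real.volume_Icc_pi]; simp
  have : IsProbabilityMeasure (volume.restrict Q) := ⟨by simp [hvol]⟩
  have hcont : Continuous (fun p : ℝ × (Fin 3 → ℝ) => p.1 * K (x0 + (p.1 * δ) • p.2)) := by
    fun_prop
  have c1 : Continuous (fun y : Fin 3 → ℝ => ∫ r in (0:ℝ)..1, r * K (x0 + (r * δ) • y)) := by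
    apply intervalIntegral.continuous_parametric_intervalIntegral_of_continuous'
    fun_prop
  have c2 : Continuous (fun r : ℝ => ∫ y in Q, r * K (x0 + (r * δ) • y)) :=
    continuous_parametric_integral_of_continuous hcont hQc
  have s1 : A ≤ ∫ y in Q, B * ∫ r in (0:ℝ)..1, r * K (x0 + (r * δ) • y) := by
    have : A = ∫ y in Q, A := by simp
    rw [this]
    refine setIntegral_mono_on (by simp [hvol]) ?_ measurableSet_Icc hA
    exact ((continuous_const.mul c1).continuousOn).integrableOn_compact hQc
  rw [integral_const_mul] at s1
  have s2 : ∫ y in Q, ∫ r in (0:ℝ)..1, r * K (x0 + (r * δ) • y)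
      = ∫ r in (0:ℝ)..1, ∫ y in Q, r * K (x0 + (r * δ) • y) := by
    simp_rw [intervalIntegral.integral_of_le zero_le_one]
    rw [MeasureTheory.integral_integral_swap]
    rw [Measure.prod_restrict]
    have : IntegrableOn (fun p : (Fin 3 → ℝ) × ℝ => p.2 * K (x0 + (p.2 * δ) • p.1))
        (Q ×ˢ Set.Icc (0:ℝ) 1) (volume.prod volume) := by
      refine ContinuousOn.integrableOn_compact (hQc.prod isCompact_Icc) (Continuous.continuousOn ?_)
      fun_prop
    exact this.mono_set (Set.prod_mono le_rfl Set.Ioc_subset_Icc_self)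
  have s3 : ∀ r ∈ Set.Ioo (0:ℝ) 1, ∫ y in Q, r * K (x0 + (r * δ) • y) ≤
      (Real.sqrt M / Real.sqrt (δ ^ 3)) * r ^ (-(1/2) : ℝ) := by
    intro r hr
    have hr0 := hr.1
    rw [integral_const_mul]
    have j1 : (∫ y in Q, K (x0 + (r * δ) • y)) ^ 2 ≤ ∫ y in Q, K (x0 + (r * δ) • y) ^ 2 := by
      have := ConvexOn.map_integral_le (μ := volume.restrict Q) (g := fun z : ℝ => z ^ 2)
        (s := Set.univ) (f := fun y => K (x0 + (r * δ) • y)) (even_two.convexOn_pow) (by fun_prop)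
        isClosed_univ (by simp)
        ((Continuous.continuousOn (by fun_prop)).integrableOn_compact hQc)
        ((Continuous.continuousOn (by simp only [Function.comp_def]; fun_prop)).integrableOn_compact hQc)
      simpa using this
    have e1 : ∫ y, K (x0 + (r * δ) • y) ^ 2 = ((r * δ) ^ 3)⁻¹ * M := by
      have := Measure.integral_comp_smul (volume : Measure (Fin 3 → ℝ)) 
        (fun x => K (x0 + x) ^ 2) (r * δ)
      rw [this, integral_add_left_eq_self (fun x => K x ^ 2) x0]
      simp only [Module.finrank_fin_fun, smul_eq_mul]
      rw [abs_of_nonneg (by positivity)]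
    have i1 : Integrable (fun y => K (x0 + (r * δ) • y) ^ 2) :=
      (hint.comp_add_left x0).comp_smul (by positivity : r * δ ≠ 0)
    have j2 : ∫ y in Q, K (x0 + (r * δ) • y) ^ 2 ≤ ((r * δ) ^ 3)⁻¹ * M := by
      rw [← e1]
      exact setIntegral_le_integral i1 (Filter.Eventually.of_forall fun y => sq_nonneg _)
    have j3 := Real.le_sqrt_of_sq_le (j1.trans j2)
    refine (mul_le_mul_of_nonneg_left j3 hr0.le).trans (le_of_eq ?_)
    rw [Real.sqrt_mul (by positivity), Real.sqrt_inv, mul_pow, Real.sqrt_mul (by positivity)]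
    have : Real.sqrt (r ^ 3) = r * Real.sqrt r := by
      rw [show r ^ 3 = r ^ 2 * r by ring, Real.sqrt_mul (by positivity), Real.sqrt_sq hr0.le]
    rw [this, Real.rpow_neg hr0.le, ← Real.sqrt_eq_rpow]
    have := Real.sqrt_pos.2 hr0
    field_simp
  have i0 : IntervalIntegrable (fun r : ℝ => r ^ (-(1/2) : ℝ)) volume 0 1 :=
    intervalIntegral.intervalIntegrable_rpow' (by norm_num)
  have s4 : ∫ r in (0:ℝ)..1, ∫ y in Q, r * K (x0 + (r * δ) • y) ≤
      ∫ r in (0:ℝ)..1, (Real.sqrt M / Real.sqrt (δ ^ 3)) * r ^ (-(1/2) : ℝ) :=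
    intervalIntegral.integral_mono_on_of_le_Ioo zero_le_one (c2.intervalIntegrable _ _)
      (i0.const_mul _) s3
  have s5 : ∫ r in (0:ℝ)..1, (Real.sqrt M / Real.sqrt (δ ^ 3)) * r ^ (-(1/2) : ℝ) =
      2 * (Real.sqrt M / Real.sqrt (δ ^ 3)) := by
    rw [intervalIntegral.integral_const_mul, integral_rpow (by left; norm_num)]
    norm_num
    ring
  rw [s2] at s1
  exact s1.trans (mul_le_mul_of_nonneg_left (s4.trans s5.le) hB)

def wsP (i : Fin 3) (f : (Fin 3 → ℝ) → ℝ) : (Fin 3 → ℝ) → ℝ :=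
  fun x => fderiv ℝ f x (Pi.single i 1)

lemma ws_rad_sq (x : Fin 3 → ℝ) : rad x ^ 2 = ∑ i : Fin 3, (x i) ^ 2 :=
  Real.sq_sqrt (Finset.sum_nonneg fun i _ => sq_nonneg _)

lemma ws_hypT_sq (s : ℝ) (x : Fin 3 → ℝ) : hypT s x ^ 2 = s ^ 2 + ∑ i : Fin 3, (x i) ^ 2 := by
  rw [hypT, Real.sq_sqrt (by positivity), ws_rad_sq]

lemma ws_hypT_pos {s : ℝ} (hs : 0 < s) (x : Fin 3 → ℝ) : 0 < hypT s x :=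
  Real.sqrt_pos.2 (by positivity)

lemma ws_abs_le (s : ℝ) (x : Fin 3 → ℝ) (i : Fin 3) : |x i| ≤ hypT s x := by
  refine abs_le_of_sq_le_sq ?_ (Real.sqrt_nonneg _)
  rw [ws_hypT_sq]
  have := Finset.single_le_sum (f := fun i => x i ^ 2) (fun _ _ => sq_nonneg _) (Finset.mem_univ i)
  nlinarith [sq_nonneg s]

lemma ws_hypT_eq (s : ℝ) : hypT s = fun x => Real.sqrt (s ^ 2 + ∑ i : Fin 3, (x i) ^ 2) := by
  funext x; rw [hypT, ws_rad_sq]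

lemma ws_hypT_smooth {s : ℝ} (hs : 0 < s) : ContDiff ℝ (⊤ : ℕ∞) (hypT s) := by
  rw [ws_hypT_eq]
  refine ContDiff.sqrt (by fun_prop) ?_
  intro x; positivity

lemma ws_hypT_P {s : ℝ} (hs : 0 < s) (i : Fin 3) (x : Fin 3 → ℝ) :
    wsP i (hypT s) x = x i / hypT s x := by
  have hd : Differentiable ℝ (hypT s) := (ws_hypT_smooth hs).differentiable (by simp)
  have h1 : HasFDerivAt (fun x : Fin 3 → ℝ => s ^ 2 + ∑ j : Fin 3, (x j) ^ 2)
      (∑ j : Fin 3, (2 * x j) • ContinuousLinearMap.proj (R := ℝ) (φ := fun _ : Fin 3 => ℝ) j) x := by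
    refine HasFDerivAt.const_add _ (HasFDerivAt.fun_sum fun j _ => ?_)
    have := (hasFDerivAt_apply (𝕜 := ℝ) (F' := fun _ : Fin 3 => ℝ) j x).pow 2
    simpa using this
  have h2 : HasFDerivAt (fun x : Fin 3 → ℝ => s ^ 2 + ∑ j : Fin 3, (x j) ^ 2)
      ((2 * hypT s x) • fderiv ℝ (hypT s) x) x := by
    have := (hd x).hasFDerivAt.pow 2
    have e : (fun x : Fin 3 → ℝ => s ^ 2 + ∑ j : Fin 3, (x j) ^ 2) = fun x => hypT s x ^ 2 := by
      funext x; rw [ws_hypT_sq]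
    rw [e]; simpa using this
  have h3 := congrArg (fun L => L (Pi.single i (1:ℝ))) (h1.unique h2)
  have hp := ws_hypT_pos hs x
  rw [wsP, eq_div_iff hp.ne']
  simp [Pi.single_apply] at h3
  linarith

lemma ws_pt_smooth {s : ℝ} (hs : 0 < s) : ContDiff ℝ (⊤ : ℕ∞) (pt s) :=
  (ws_hypT_smooth hs).prodMk contDiff_id

lemma ws_Lb_pt {s : ℝ} (hs : 0 < s) {ψ : Fn} (hψ : ContDiff ℝ (⊤ : ℕ∞) ψ) (i : Fin 3)
    (x : Fin 3 → ℝ) : Lb i ψ (pt s x) = hypT s x * wsP i (fun x => ψ (pt s x)) x := by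
  have hd : Differentiable ℝ (hypT s) := (ws_hypT_smooth hs).differentiable (by simp)
  have hp := ws_hypT_pos hs x
  have h1 : HasFDerivAt (pt s) ((fderiv ℝ (hypT s) x).prod (ContinuousLinearMap.id ℝ _)) x :=
    (hd x).hasFDerivAt.prodMk (hasFDerivAt_id x)
  have h2 := ((hψ.differentiable (by simp)) (pt s x)).hasFDerivAt.comp x h1
  have h3 : wsP i (fun x => ψ (pt s x)) x =
      fderiv ℝ ψ (pt s x) (x i / hypT s x, Pi.single i 1) := by
    rw [← ws_hypT_P hs]
    unfold wsP
    rw [show (fun x => ψ (pt s x)) = ψ ∘ pt s from rfl, h2.fderiv]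
    simp
  have h4 : ((x i / hypT s x, Pi.single i 1) : Pt) = (x i / hypT s x) • e4 0 + e4 i.succ := by
    ext j
    · simp [e4]
    · fin_cases i <;> fin_cases j <;> simp [e4]
  rw [h3, h4, map_add, map_smul]
  simp only [Lb, pdX, pdT, pdc, pt, smul_eq_mul]
  field_simp
  ring

lemma ws_Lb_smooth {ψ : Fn} (hψ : ContDiff ℝ (⊤ : ℕ∞) ψ) (i : Fin 3) :
    ContDiff ℝ (⊤ : ℕ∞) (Lb i ψ) := by
  have h : ∀ α, ContDiff ℝ (⊤ : ℕ∞) (pdc α ψ) := fun α =>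
    (hψ.fderiv_right (m := (⊤ : ℕ∞)) (by simp)).clm_apply contDiff_const
  have h0 := h 0
  have h1 := h i.succ
  exact (contDiff_fst.mul h1).add
    (((contDiff_apply ℝ ℝ i).comp contDiff_snd).mul h0)

lemma ws_Lb_supp {s : ℝ} (hs : 0 < s) {ψ : Fn} (hψ : ContDiff ℝ (⊤ : ℕ∞) ψ) (i : Fin 3)
    (hc : HasCompactSupport (fun x : Fin 3 → ℝ => ψ (pt s x))) :
    HasCompactSupport (fun x : Fin 3 → ℝ => Lb i ψ (pt s x)) := by
  have h : (fun x : Fin 3 → ℝ => Lb i ψ (pt s x)) = 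
      fun x => hypT s x * wsP i (fun x => ψ (pt s x)) x := by
    funext x; exact ws_Lb_pt hs hψ i x
  rw [h]
  exact HasCompactSupport.mul_left (hc.fderiv_apply ℝ _)

/-- Smooth with compactly supported restriction. -/
def wsGood (s : ℝ) (ψ : Fn) : Prop :=
  ContDiff ℝ (⊤ : ℕ∞) ψ ∧ HasCompactSupport (fun x : Fin 3 → ℝ => ψ (pt s x))

lemma wsGood.Lb {s : ℝ} (hs : 0 < s) {ψ : Fn} (h : wsGood s ψ) (i : Fin 3) :
    wsGood s (Lb i ψ) := ⟨ws_Lb_smooth h.1 i, ws_Lb_supp hs h.1 i h.2⟩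

lemma wsGood.iter {s : ℝ} (hs : 0 < s) {ψ : Fn} (h : wsGood s ψ) (i : Fin 3) (n : ℕ) :
    wsGood s ((WKG.Lb i)^[n] ψ) := by
  induction n with
  | zero => exact h
  | succ n ih => rw [Function.iterate_succ_apply']; exact ih.Lb hs i

lemma wsGood.applyL {s : ℝ} (hs : 0 < s) {ψ : Fn} (h : wsGood s ψ) (J : Fin 3 → ℕ) :
    wsGood s (applyL J ψ) := ((h.iter hs 2 _).iter hs 1 _).iter hs 0 _

lemma ws_P_smooth {f : (Fin 3 → ℝ) → ℝ} (hf : ContDiff ℝ (⊤ : ℕ∞) f) (i : Fin 3) :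
    ContDiff ℝ (⊤ : ℕ∞) (wsP i f) :=
  (hf.fderiv_right (m := (⊤ : ℕ∞)) (by simp)).clm_apply contDiff_const

lemma ws_P_comm {f : (Fin 3 → ℝ) → ℝ} (hf : ContDiff ℝ (⊤ : ℕ∞) f) (i j : Fin 3)
    (x : Fin 3 → ℝ) : wsP i (wsP j f) x = wsP j (wsP i f) x := by
  have hd : DifferentiableAt ℝ (fderiv ℝ f) x :=
    ((hf.fderiv_right (m := (⊤ : ℕ∞)) (by simp)).differentiable (by simp)) x
  have hs : IsSymmSndFDerivAt ℝ f x :=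
    hf.contDiffAt.isSymmSndFDerivAt (by simp only [minSmoothness_of_isRCLikeNormedField]; exact WithTop.coe_le_coe.2 (le_top : (2 : ℕ∞) ≤ ⊤))
  have e : ∀ i j, wsP i (wsP j f) x = fderiv ℝ (fderiv ℝ f) x (Pi.single i 1) (Pi.single j 1) := by
    intro i j
    unfold wsP
    rw [fderiv_clm_apply hd (differentiableAt_const _)]
    simp
  rw [e, e]; exact hs _ _

lemma ws_PP {s : ℝ} (hs : 0 < s) {ψ : Fn} (hψ : ContDiff ℝ (⊤ : ℕ∞) ψ) (i j : Fin 3)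
    (x : Fin 3 → ℝ) : hypT s x ^ 2 * wsP i (wsP j (fun x => ψ (pt s x))) x =
      Lb i (Lb j ψ) (pt s x) - x i * wsP j (fun x => ψ (pt s x)) x := by
  have hp := ws_hypT_pos hs x
  have hf : ContDiff ℝ (⊤ : ℕ∞) (fun x => ψ (pt s x)) := hψ.comp (ws_pt_smooth hs)
  rw [ws_Lb_pt hs (ws_Lb_smooth hψ j) i]
  have e : (fun x => Lb j ψ (pt s x)) = fun x => hypT s x * wsP j (fun x => ψ (pt s x)) x := by
    funext x; exact ws_Lb_pt hs hψ j x
  rw [e]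
  have d1 : DifferentiableAt ℝ (hypT s) x := (ws_hypT_smooth hs).differentiable (by simp) x
  have d2 : DifferentiableAt ℝ (wsP j (fun x => ψ (pt s x))) x :=
    (ws_P_smooth hf j).differentiable (by simp) x
  have e2 : wsP i (fun x => hypT s x * wsP j (fun x => ψ (pt s x)) x) x =
      hypT s x * wsP i (wsP j (fun x => ψ (pt s x))) x
      + wsP j (fun x => ψ (pt s x)) x * wsP i (hypT s) x := by
    rw [wsP, fderiv_fun_mul d1 d2]
    simp [wsP]
  rw [e2, ws_hypT_P hs]
  field_simp
  ring

lemma ws_fderiv_eq {f : (Fin 3 → ℝ) → ℝ} (x v : Fin 3 → ℝ) :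
    fderiv ℝ f x v = ∑ i, v i * wsP i f x := by
  have : v = ∑ i, v i • (Pi.single i (1:ℝ) : Fin 3 → ℝ) := by
    ext j; simp [Finset.sum_apply, Pi.single_apply]
  conv_lhs => rw [this]
  simp [wsP]

lemma ws_line {f : (Fin 3 → ℝ) → ℝ} (hf : ContDiff ℝ (⊤ : ℕ∞) f) (x0 v : Fin 3 → ℝ) (r : ℝ) :
    HasDerivAt (fun r : ℝ => f (x0 + r • v)) (∑ i, v i * wsP i f (x0 + r • v)) r := by
  rw [← ws_fderiv_eq]
  have h1 : HasDerivAt (fun r : ℝ => x0 + r • v) v r := by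
    simpa using ((hasDerivAt_id r).smul_const v).const_add x0
  exact ((hf.differentiable (by simp)) _).hasFDerivAt.comp_hasDerivAt r h1

lemma ws_compar {s : ℝ} (hs : 0 < s) (x0 v : Fin 3 → ℝ) (hv : ∀ i, |v i| ≤ hypT s x0 / 4) :
    hypT s x0 / 2 ≤ hypT s (x0 + v) ∧ hypT s (x0 + v) ≤ 3 / 2 * hypT s x0 := by
  have p0 := ws_hypT_pos hs x0
  have p1 := ws_hypT_pos hs (x0 + v)
  have q0 := ws_hypT_sq s x0
  have q1 := ws_hypT_sq s (x0 + v)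
  have hv2 : ∀ i, v i ^ 2 ≤ (hypT s x0 / 4) ^ 2 := fun i => by
    rw [← sq_abs]; gcongr; exact hv i
  have a0 := hv2 0
  have a1 := hv2 1
  have a2 := hv2 2
  simp only [Fin.sum_univ_three, Pi.add_apply] at q0 q1
  constructor
  · refine (sq_le_sq₀ (by positivity) p1.le).1 ?_
    nlinarith [sq_nonneg (x0 0 + 2 * v 0), sq_nonneg (x0 1 + 2 * v 1), sq_nonneg (x0 2 + 2 * v 2),
      sq_nonneg s]
  · refine (sq_le_sq₀ p1.le (by positivity)).1 ?_
    nlinarith [sq_nonneg (x0 0 - 2 * v 0), sq_nonneg (x0 1 - 2 * v 1), sq_nonneg (x0 2 - 2 * v 2),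
      sq_nonneg s]

lemma ws_core {s : ℝ} (hs : 0 < s) (w : ℝ) (hw : 0 ≤ w) (f K : (Fin 3 → ℝ) → ℝ)
    (hf : ContDiff ℝ (⊤ : ℕ∞) f) (hK : Continuous K) (hK0 : ∀ x, 0 ≤ K x)
    (h0 : ∀ x, w * |f x| ≤ hypT s x * K x)
    (h1 : ∀ x i, w * |wsP i f x| ≤ K x)
    (h2 : ∀ x i j, w * (hypT s x * |wsP i (wsP j f) x|) ≤ 2 * K x)
    (x0 y : Fin 3 → ℝ) (hy : y ∈ Set.Icc (0 : Fin 3 → ℝ) 1) :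
    w * |f x0| ≤ (20 * hypT s x0) * ∫ r in (0:ℝ)..1, r * K (x0 + (r * (hypT s x0 / 4)) • y) := by
  set t0 := hypT s x0 with ht0
  have p0 : 0 < t0 := ws_hypT_pos hs x0
  set v : Fin 3 → ℝ := (t0 / 4) • y with hv
  have hvb : ∀ i, |v i| ≤ t0 / 4 := by
    intro i
    have a := hy.1 i
    have b := hy.2 i
    simp only [Pi.zero_apply, Pi.one_apply] at a b
    rw [hv, Pi.smul_apply, smul_eq_mul, abs_of_nonneg (by positivity)]
    nlinarith
  have cP : ∀ i, Continuous (wsP i f) := fun i => (ws_P_smooth hf i).continuous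
  have cPP : ∀ i j, Continuous (wsP i (wsP j f)) := fun i j =>
    (ws_P_smooth (ws_P_smooth hf j) i).continuous
  have H1 : ∀ r, HasDerivAt (fun r : ℝ => w * f (x0 + r • v))
      (w * ∑ i, v i * wsP i f (x0 + r • v)) r := fun r => (ws_line hf x0 v r).const_mul w
  have H2 : ∀ r, HasDerivAt (fun r : ℝ => w * ∑ i, v i * wsP i f (x0 + r • v))
      (w * ∑ i, v i * ∑ j, v j * wsP j (wsP i f) (x0 + r • v)) r := fun r =>
    (HasDerivAt.fun_sum fun i _ =>
      (ws_line (ws_P_smooth hf i) x0 v r).const_mul (v i)).const_mul w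
  have key := ws_oneD _ _ _ H1 H2 (by fun_prop)
    (fun r => (20 * t0) * K (x0 + r • v)) (by fun_prop) ?_
  · simp only [zero_smul, add_zero, abs_mul, abs_of_nonneg hw] at key
    refine key.trans (le_of_eq ?_)
    rw [← intervalIntegral.integral_const_mul]
    congr 1
    funext r
    rw [hv, smul_smul]
    ring
  · intro r hr
    have hrv : ∀ i, |(r • v) i| ≤ t0 / 4 := by
      intro i
      rw [Pi.smul_apply, smul_eq_mul, abs_mul, abs_of_nonneg hr.1]
      exact (mul_le_of_le_one_left (abs_nonneg _) hr.2).trans (hvb i)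
    obtain ⟨l, u⟩ := ws_compar hs x0 (r • v) hrv
    set x := x0 + r • v
    have px := ws_hypT_pos hs x
    set t := hypT s x
    have k0 := hK0 x
    have b0 : |w * f x| ≤ t * K x := by rw [abs_mul, abs_of_nonneg hw]; exact h0 x
    have b1 : |w * ∑ i, v i * wsP i f x| ≤ 3 * (t0 / 4 * K x) := by
      rw [Finset.mul_sum]
      refine (Finset.abs_sum_le_sum_abs _ _).trans ?_
      refine (Finset.sum_le_card_nsmul _ _ (t0 / 4 * K x) ?_).trans (by simp)
      intro i _
      rw [abs_mul, abs_mul, abs_of_nonneg hw]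
      calc w * (|v i| * |wsP i f x|) = |v i| * (w * |wsP i f x|) := by ring
        _ ≤ _ := mul_le_mul (hvb i) (h1 x i) (by positivity) (by positivity)
    have b2 : |w * ∑ i, v i * ∑ j, v j * wsP j (wsP i f) x| ≤ 9 * (t0 / 4 * K x) := by
      have q : ∀ i j, |w * (v i * (v j * wsP j (wsP i f) x))| ≤ t0 / 4 * K x := by
        intro i j
        simp only [abs_mul, abs_of_nonneg hw]
        have e : t0 / 4 ≤ t / 2 := by linarith
        have c : w * (t / 2 * |wsP j (wsP i f) x|) ≤ K x := by
          have := h2 x j i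
          change w * (t * |wsP j (wsP i f) x|) ≤ 2 * K x at this
          linarith
        calc w * (|v i| * (|v j| * |wsP j (wsP i f) x|))
            = |v i| * (w * (|v j| * |wsP j (wsP i f) x|)) := by ring
          _ ≤ t0 / 4 * (w * (t / 2 * |wsP j (wsP i f) x|)) := by
              gcongr
              · exact hvb i
              · exact (hvb j).trans e
          _ ≤ _ := by gcongr
      simp only [Finset.mul_sum]
      refine (Finset.abs_sum_le_sum_abs _ _).trans ?_
      have : ∀ i ∈ Finset.univ, |∑ j, w * (v i * (v j * wsP j (wsP i f) x))| ≤
          3 * (t0 / 4 * K x) := by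
        intro i _
        refine (Finset.abs_sum_le_sum_abs _ _).trans ?_
        exact (Finset.sum_le_card_nsmul _ _ (t0 / 4 * K x) fun j _ => q i j).trans (by simp)
      refine (Finset.sum_le_card_nsmul _ _ _ this).trans (le_of_eq ?_)
      simp
      ring
    have : t * K x ≤ 3 / 2 * t0 * K x := by gcongr
    nlinarith [mul_nonneg p0.le k0]

lemma ws_main {s : ℝ} (hs : 0 < s) (w : ℝ) (hw : 0 ≤ w) (φ : Fn) (hφ : wsGood s φ)
    (x0 : Fin 3 → ℝ) :
    w * |φ (pt s x0)| * Real.sqrt (hypT s x0) ≤ 320 * (6 * ∑ J : Fin 3 → Fin 3,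
              if (∑ i : Fin 3, (J i : ℕ)) ≤ 2 then
                L2H s (fun p => (w / p.1) * applyL (fun i => (J i : ℕ)) φ p)
              else 0) := by
  set k : (Fin 3 → Fin 3) → (Fin 3 → ℝ) → ℝ := fun J x =>
    if (∑ i : Fin 3, (J i : ℕ)) ≤ 2 then
      (w / hypT s x) * applyL (fun i => (J i : ℕ)) φ (pt s x) else 0 with hk
  have ct : Continuous (hypT s) := (ws_hypT_smooth hs).continuous
  have tp := ws_hypT_pos hs
  have kc : ∀ J, Continuous (k J) := by
    intro J
    simp only [hk]
    split_ifs
    · refine (continuous_const.div ct fun x => (tp x).ne').mul ?_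
      exact (hφ.applyL hs _).1.continuous.comp (ws_pt_smooth hs).continuous
    · exact continuous_const
  have kint : ∀ J, Integrable (fun x => k J x ^ 2) := by
    intro J
    refine ((kc J).pow 2).integrable_of_hasCompactSupport ?_
    have : HasCompactSupport (k J) := by
      simp only [hk]
      split_ifs
      · exact HasCompactSupport.mul_left (hφ.applyL hs _).2
      · exact HasCompactSupport.zero
    simpa [pow_two] using this.mul_left (f := k J)
  set K : (Fin 3 → ℝ) → ℝ := fun x => ∑ J, |k J x| with hKd
  have Kc : Continuous K := by simp only [hKd]; fun_prop
  have K0 : ∀ x, 0 ≤ K x := fun x => Finset.sum_nonneg fun J _ => abs_nonneg _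
  have kK : ∀ J x, |k J x| ≤ K x := fun J x =>
    Finset.single_le_sum (f := fun J => |k J x|) (fun _ _ => abs_nonneg _) (Finset.mem_univ J)
  have Kle : ∀ x, K x ^ 2 ≤ 27 * ∑ J, k J x ^ 2 := by
    intro x
    have := sq_sum_le_card_mul_sum_sq (s := Finset.univ) (f := fun J => |k J x|)
    simpa [sq_abs] using this
  have Kb : Integrable (fun x => 27 * ∑ J, k J x ^ 2) :=
    (integrable_finsetSum _ fun J _ => kint J).const_mul _
  have Kint : Integrable (fun x => K x ^ 2) := by
    refine Kb.mono' (by fun_prop) (Filter.Eventually.of_forall fun x => ?_)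
    rw [Real.norm_of_nonneg (sq_nonneg _)]
    exact Kle x
  set S := ∑ J : Fin 3 → Fin 3, Real.sqrt (∫ x, k J x ^ 2) with hS
  have hSe : (∑ J : Fin 3 → Fin 3,
              if (∑ i : Fin 3, (J i : ℕ)) ≤ 2 then
                L2H s (fun p => (w / p.1) * applyL (fun i => (J i : ℕ)) φ p)
              else 0) = S := by
    refine Finset.sum_congr rfl fun J _ => ?_
    simp only [hk]
    split_ifs
    · rfl
    · simp
  rw [hSe]
  have S0 : 0 ≤ S := Finset.sum_nonneg fun J _ => Real.sqrt_nonneg _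
  have KS : Real.sqrt (∫ x, K x ^ 2) ≤ 6 * S := by
    refine Real.sqrt_le_iff.2 ⟨by positivity, ?_⟩
    have a1 : ∫ x, K x ^ 2 ≤ 27 * ∑ J, ∫ x, k J x ^ 2 := by
      rw [← integral_finsetSum _ fun J _ => kint J, ← integral_const_mul]
      exact integral_mono Kint Kb Kle
    have a2 : ∑ J, ∫ x, k J x ^ 2 ≤ S ^ 2 := by
      have := Finset.sum_sq_le_sq_sum_of_nonneg (s := Finset.univ)
        (f := fun J => Real.sqrt (∫ x, k J x ^ 2)) (fun J _ => Real.sqrt_nonneg _)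
      refine le_trans (le_of_eq ?_) this
      refine Finset.sum_congr rfl fun J _ => ?_
      rw [Real.sq_sqrt (integral_nonneg fun x => sq_nonneg _)]
    nlinarith [sq_nonneg S]
  have b0 : ∀ x, w * |φ (pt s x)| ≤ hypT s x * K x := by
    intro x
    have := kK (fun _ => 0) x
    simp only [hk, applyL] at this
    simp [abs_mul, abs_div, abs_of_nonneg hw, abs_of_pos (tp x)] at this
    rw [div_mul_eq_mul_div, div_le_iff₀ (tp x)] at this
    linarith
  have bL : ∀ x i, w * |Lb i φ (pt s x)| ≤ hypT s x * K x := by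
    intro x i
    have := kK (fun j => if j = i then 1 else 0) x
    have e : applyL (fun j => (((if j = i then 1 else 0 : Fin 3)) : ℕ)) φ = Lb i φ := by
      fin_cases i <;> simp [applyL]
    simp only [hk, e] at this
    rw [if_pos (by fin_cases i <;> simp [Fin.sum_univ_three])] at this
    simp only [abs_mul, abs_div, abs_of_nonneg hw, abs_of_pos (tp x)] at this
    rw [div_mul_eq_mul_div, div_le_iff₀ (tp x)] at this
    linarith
  have bLL : ∀ x i j, i ≤ j → w * |Lb i (Lb j φ) (pt s x)| ≤ hypT s x * K x := by
    intro x i j hij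
    have := kK (fun l => (if l = i then 1 else 0) + (if l = j then 1 else 0)) x
    have e : applyL (fun l => (((if l = i then 1 else 0) + (if l = j then 1 else 0) : Fin 3) : ℕ)) φ
        = Lb i (Lb j φ) := by
      fin_cases i <;> fin_cases j <;> first | (exfalso; revert hij; decide) | simp [applyL]
    simp only [hk, e] at this
    rw [if_pos (by clear this e hij; revert i j; decide)] at this
    simp only [abs_mul, abs_div, abs_of_nonneg hw, abs_of_pos (tp x)] at this
    rw [div_mul_eq_mul_div, div_le_iff₀ (tp x)] at this
    linarith
  set f : (Fin 3 → ℝ) → ℝ := fun x => φ (pt s x) with hf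
  have fs : ContDiff ℝ (⊤ : ℕ∞) f := hφ.1.comp (ws_pt_smooth hs)
  have b1 : ∀ x i, w * |wsP i f x| ≤ K x := by
    intro x i
    have := bL x i
    rw [ws_Lb_pt hs hφ.1, abs_mul, abs_of_pos (tp x)] at this
    refine le_of_mul_le_mul_left ?_ (tp x)
    linarith
  have b2le : ∀ x i j, i ≤ j → w * (hypT s x * |wsP i (wsP j f) x|) ≤ 2 * K x := by
    intro x i j hij
    have h1 := bLL x i j hij
    have h2 := ws_PP hs hφ.1 i j x
    refine le_of_mul_le_mul_left ?_ (tp x)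
    have h3 : hypT s x ^ 2 * |wsP i (wsP j f) x| ≤
        |Lb i (Lb j φ) (pt s x)| + hypT s x * |wsP j f x| := by
      calc _ = |hypT s x ^ 2 * wsP i (wsP j f) x| := by rw [abs_mul, abs_of_nonneg (sq_nonneg (hypT s x))]
        _ ≤ |Lb i (Lb j φ) (pt s x)| + |x i * wsP j f x| := by rw [h2]; exact abs_sub _ _
        _ ≤ _ := by rw [abs_mul]; gcongr; exact ws_abs_le s x i
    have h4 := mul_le_mul_of_nonneg_left h3 hw
    have h5 := mul_le_mul_of_nonneg_left (b1 x j) (tp x).le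
    nlinarith
  have b2 : ∀ x i j, w * (hypT s x * |wsP i (wsP j f) x|) ≤ 2 * K x := by
    intro x i j
    rcases le_total i j with h | h
    · exact b2le x i j h
    · rw [ws_P_comm fs]; exact b2le x j i h
  have t0 := tp x0
  have fin := ws_avg K Kc Kint x0 (hypT s x0 / 4) (w * |f x0|) (20 * hypT s x0)
    (by positivity) (by positivity) (ws_core hs w hw f K fs Kc K0 b0 b1 b2 x0)
  have hq : Real.sqrt ((hypT s x0 / 4) ^ 3) = hypT s x0 * Real.sqrt (hypT s x0) / 8 := by
    rw [show (hypT s x0 / 4) ^ 3 = (hypT s x0 / 8) ^ 2 * hypT s x0 by ring,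
      Real.sqrt_mul (by positivity), Real.sqrt_sq (by positivity)]
    ring
  rw [hq] at fin
  have sp := Real.sqrt_pos.2 t0
  calc w * |f x0| * Real.sqrt (hypT s x0) ≤ _ := mul_le_mul_of_nonneg_right fin sp.le
    _ = 320 * Real.sqrt (∫ x, K x ^ 2) := by field_simp; ring
    _ ≤ _ := by gcongr

/-- Weighted Sobolev estimate on hyperboloids. -/
theorem weighted_sobolev (a : ℝ) (ha : 0 ≤ a) :
    ∃ C : ℝ, 0 < C ∧ ∀ s0 s : ℝ, 1 < s0 → s0 ≤ s →
      ∀ φ : Fn, ContDiff ℝ (⊤ : ℕ∞) φ →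
        (∀ σ : ℝ, HasCompactSupport (fun x : Fin 3 → ℝ => φ (pt σ x))) →
        LinfH s (fun p => s ^ a * tauP p ^ ((1:ℝ)/2) * φ p)
          ≤ C * ∑ J : Fin 3 → Fin 3,
              if (∑ i : Fin 3, (J i : ℕ)) ≤ 2 then
                L2H s (fun p => (s ^ a / p.1) * applyL (fun i => (J i : ℕ)) φ p)
              else 0 := by
  refine ⟨2 * (320 * 6), by norm_num, ?_⟩
  intro s0 s hs0 hs φ hφ hc
  have sp : 1 < s := lt_of_lt_of_le hs0 hs
  have s1 : 0 < s := by linarith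
  unfold LinfH
  refine ciSup_le fun x => ?_
  have hm := ws_main s1 (s ^ a) (by positivity) φ ⟨hφ, hc s⟩ x
  have tp := ws_hypT_pos s1 x
  have hr0 : 0 ≤ rad x := Real.sqrt_nonneg _
  have t2 : hypT s x ^ 2 = s ^ 2 + rad x ^ 2 := Real.sq_sqrt (by positivity)
  have hrt : rad x ≤ hypT s x := (sq_le_sq₀ hr0 tp.le).1 (by nlinarith)
  have ht1 : 1 ≤ hypT s x := by
    refine (sq_le_sq₀ zero_le_one tp.le).1 ?_
    nlinarith [sq_nonneg (rad x)]
  have hτ : tauP (pt s x) ≤ 4 * hypT s x := by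
    refine Real.sqrt_le_iff.2 ⟨by positivity, ?_⟩
    simp only [ubar, pt]
    nlinarith
  have hτ0 : 0 ≤ tauP (pt s x) := Real.sqrt_nonneg _
  have hτ2 : tauP (pt s x) ^ ((1:ℝ)/2) ≤ 2 * Real.sqrt (hypT s x) := by
    rw [← Real.sqrt_eq_rpow]
    refine Real.sqrt_le_iff.2 ⟨by positivity, ?_⟩
    rw [mul_pow, Real.sq_sqrt tp.le]
    linarith
  have hw : 0 ≤ s ^ a := by positivity
  rw [abs_mul, abs_mul, abs_of_nonneg hw, abs_of_nonneg (by positivity)]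
  calc s ^ a * tauP (pt s x) ^ ((1:ℝ)/2) * |φ (pt s x)|
      ≤ s ^ a * (2 * Real.sqrt (hypT s x)) * |φ (pt s x)| := by gcongr
    _ = 2 * (s ^ a * |φ (pt s x)| * Real.sqrt (hypT s x)) := by ring
    _ ≤ _ := by linarith
end
end

section
/- Coercivity of the flux density: There exist absolute constants c, C > 0 such that for all real numbers X_u ≥ 0, X_r ≥ 0, μ ∈ [0,1), A, B, G ∈ ℝ, and D ≥ 0, the quantity E = X_u(1−μ)A² + (1/2)(X_u + X_r(1+μ))B² − X_u(1−μ)AB + (1/2)(X_u + X_r(1−μ))G² + D satisfies c·E' ≤ E ≤ C·E', where E' = X_u(1−μ)A² + (X_u + X_r(1+μ))B² + (X_u + X_r(1−μ))G² + D. (Here A, B, G play the roles of ∂_u^BΦ, ∂_r^BΦ, |∇̸Φ| and μ = r/t in the flux ^{(X)}P̃_α N'^α of the paper.) -/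
open MeasureTheory Real Set

noncomputable section

/-- Coercivity of the flux density: two-sided comparison between the flux quadratic
form and a sum of squares. -/
theorem flux_density_coercive :
    ∃ c C : ℝ, 0 < c ∧ 0 < C ∧
      ∀ Xu Xr μ A B G D : ℝ, 0 ≤ Xu → 0 ≤ Xr → μ ∈ Set.Ico (0:ℝ) 1 → 0 ≤ D →
        c * (Xu * (1-μ) * A^2 + (Xu + Xr * (1+μ)) * B^2 + (Xu + Xr * (1-μ)) * G^2 + D)
          ≤ Xu * (1-μ) * A^2 + (1/2) * (Xu + Xr * (1+μ)) * B^2 - Xu * (1-μ) * A * B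
            + (1/2) * (Xu + Xr * (1-μ)) * G^2 + D
        ∧ Xu * (1-μ) * A^2 + (1/2) * (Xu + Xr * (1+μ)) * B^2 - Xu * (1-μ) * A * B
            + (1/2) * (Xu + Xr * (1-μ)) * G^2 + D
          ≤ C * (Xu * (1-μ) * A^2 + (Xu + Xr * (1+μ)) * B^2 + (Xu + Xr * (1-μ)) * G^2 + D) := by
  refine ⟨1/8, 2, by norm_num, by norm_num, ?_⟩
  intro Xu Xr μ A B G D hXu hXr hμ hD
  obtain ⟨h0, h1⟩ := hμ
  have hm : 0 ≤ 1 - μ := by linarith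
  have hp : 0 ≤ Xu * (1-μ) := mul_nonneg hXu hm
  have hpB : 0 ≤ Xu * (1-μ) * B^2 := by positivity
  have hq : 0 ≤ Xu * μ * B^2 := by positivity
  have hw : 0 ≤ Xr * (1+μ) * B^2 := by positivity
  have hv : 0 ≤ (Xu + Xr * (1-μ)) * G^2 := by positivity
  have hs1 : 0 ≤ Xu * (1-μ) * (A - 4/7 * B)^2 := by positivity
  have hs2 : 0 ≤ Xu * (1-μ) * (A + 1/2 * B)^2 := by positivity
  constructor
  · linarith
  · linarith
end
end
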